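/- Let P be a respecting forest of order 2, let X = {ξ₁ < ⋯ < ξ_m} be the isominimal realization of P in ℛ₂, and let c be any covering of P into ℛ₂ with image {γ₁ < ⋯ < γ_m}. Then ξ_k ≤ γ_k for all k = 1, …, m; i.e., the isominimal realization is pointwise minimal among all covers of P. -/

import Mathlib

open FirstOrder

/-- The relation symbols of the language of `ℛ₂`: three binary relations. -/
inductive ordRel : ℕ → Type
  | le : ordRel 2
  | le1 : ordRel 2
  | le2 : ordRel 2

/-- The first-order language with three binary relation symbols `≤`, `≤₁`, `≤₂`. -/
def ordLang : FirstOrder.Language := ⟨fun _ => Empty, ordRel⟩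

/-- The `ordLang`-structure on the set of ordinals below `β`, interpreting the three
relation symbols by `≤` and the given relations `le1`, `le2`. -/
def segStr (le1 le2 : Ordinal → Ordinal → Prop) (β : Ordinal) :
    ordLang.Structure {x : Ordinal // x < β} where
  funMap := fun f => Empty.elim f
  RelMap
    | .le => fun v => (v 0).1 ≤ (v 1).1
    | .le1 => fun v => le1 (v 0).1 (v 1).1
    | .le2 => fun v => le2 (v 0).1 (v 1).1

/-- Σ₁-formulas: a block of existential quantifiers applied to a quantifier-free formula. -/
inductive IsSigma1 {L : FirstOrder.Language} {α : Type} :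
    {n : ℕ} → L.BoundedFormula α n → Prop
  | of_isQF {n} {φ : L.BoundedFormula α n} (h : φ.IsQF) : IsSigma1 φ
  | ex {n} {φ : L.BoundedFormula α (n + 1)} (h : IsSigma1 φ) : IsSigma1 φ.ex

/-- Π₁-formulas: a block of universal quantifiers applied to a quantifier-free formula. -/
inductive IsPi1 {L : FirstOrder.Language} {α : Type} :
    {n : ℕ} → L.BoundedFormula α n → Prop
  | of_isQF {n} {φ : L.BoundedFormula α n} (h : φ.IsQF) : IsPi1 φ
  | all {n} {φ : L.BoundedFormula α (n + 1)} (h : IsPi1 φ) : IsPi1 φ.all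

/-- Σ₂-formulas: a block of existential quantifiers applied to a Π₁-formula. -/
inductive IsSigma2 {L : FirstOrder.Language} {α : Type} :
    {n : ℕ} → L.BoundedFormula α n → Prop
  | of_isPi1 {n} {φ : L.BoundedFormula α n} (h : IsPi1 φ) : IsSigma2 φ
  | ex {n} {φ : L.BoundedFormula α (n + 1)} (h : IsSigma2 φ) : IsSigma2 φ.ex

/-- Realization of a formula with `k` parameters in the segment structure below `β`. -/
def RealizeIn (le1 le2 : Ordinal → Ordinal → Prop) (β : Ordinal) {k : ℕ}
    (φ : ordLang.Formula (Fin k)) (v : Fin k → {x : Ordinal // x < β}) : Prop :=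
  letI := segStr le1 le2 β
  φ.Realize v

/-- `a ≤ b` and the segment below `a` is an elementary substructure of the segment below `b`
with respect to the class `C` of formulas (with parameters from below `a`). -/
def ElemSub (C : ∀ k : ℕ, ordLang.Formula (Fin k) → Prop)
    (le1 le2 : Ordinal → Ordinal → Prop) (a b : Ordinal) : Prop :=
  ∃ hab : a ≤ b,
    ∀ (k : ℕ) (φ : ordLang.Formula (Fin k)), C k φ →
      ∀ v : Fin k → {x : Ordinal // x < a},
        RealizeIn le1 le2 a φ v ↔
          RealizeIn le1 le2 b φ (fun j => ⟨(v j).1, lt_of_lt_of_le (v j).2 hab⟩)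

/-- The pair of relations `le1`, `le2` satisfies the simultaneous recursive definition of
`≤₁` and `≤₂` on the ordinals: `α ≤ᵢ β` iff `α ≤ β` and the segment below `α` is a
Σᵢ-elementary substructure of the segment below `β`. -/
def IsR2Pair (le1 le2 : Ordinal → Ordinal → Prop) : Prop :=
  (∀ a b, le1 a b ↔ ElemSub (fun _ φ => IsSigma1 φ) le1 le2 a b) ∧
  (∀ a b, le2 a b ↔ ElemSub (fun _ φ => IsSigma2 φ) le1 le2 a b)

/-- The strict part of `≤₁`. -/
def Lt1 (le1 : Ordinal → Ordinal → Prop) (a b : Ordinal) : Prop := le1 a b ∧ a ≠ b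

/-- The strict part of `≤₂`. -/
def Lt2 (le2 : Ordinal → Ordinal → Prop) (a b : Ordinal) : Prop := le2 a b ∧ a ≠ b

/-- `1^∞`: the least ordinal `ν` such that below `ν` there are `<₂`-chains of every finite
length. -/
noncomputable def OneInfty (le2 : Ordinal → Ordinal → Prop) : Ordinal :=
  sInf {ν : Ordinal | ∀ n : ℕ, ∃ β : Fin n → Ordinal,
    (∀ i, β i < ν) ∧
    ∀ (i : ℕ) (hi : i + 1 < n), Lt2 le2 (β ⟨i, Nat.lt_of_succ_lt hi⟩) (β ⟨i + 1, hi⟩)}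

/-- A respecting forest of order 2: a finite structure with a linear order `≤₀` and partial
orders `≤₁`, `≤₂` which are forests, with `≤₂ ⊆ ≤₁ ⊆ ≤₀`, and `≤ᵢ₊₁` respecting `≤ᵢ`. -/
structure RForest where
  P : Type
  [fintypeP : Fintype P]
  le0 : P → P → Prop
  le1 : P → P → Prop
  le2 : P → P → Prop
  le0_refl : ∀ p, le0 p p
  le0_trans : ∀ p q r, le0 p q → le0 q r → le0 p r
  le0_antisymm : ∀ p q, le0 p q → le0 q p → p = q
  le0_total : ∀ p q, le0 p q ∨ le0 q p
  le1_refl : ∀ p, le1 p p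
  le1_trans : ∀ p q r, le1 p q → le1 q r → le1 p r
  le1_antisymm : ∀ p q, le1 p q → le1 q p → p = q
  le2_refl : ∀ p, le2 p p
  le2_trans : ∀ p q r, le2 p q → le2 q r → le2 p r
  le2_antisymm : ∀ p q, le2 p q → le2 q p → p = q
  le2_sub_le1 : ∀ p q, le2 p q → le1 p q
  le1_sub_le0 : ∀ p q, le1 p q → le0 p q
  forest1 : ∀ p q r, le1 q p → le1 r p → le1 q r ∨ le1 r q
  forest2 : ∀ p q r, le2 q p → le2 r p → le2 q r ∨ le2 r q
  respects1 : ∀ p q r, le0 p q → le0 q r → le1 p r → le1 p q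
  respects2 : ∀ p q r, le1 p q → le1 q r → le2 p r → le2 p q

attribute [instance] RForest.fintypeP

/-- The finite set `X` of ordinals, with the relations induced from `ℛ₂`, is isomorphic to the
respecting forest `F`. -/
def Realizes (le1 le2 : Ordinal → Ordinal → Prop) (F : RForest) (X : Finset Ordinal) : Prop :=
  ∃ e : F.P ≃ {x // x ∈ X}, ∀ p q : F.P,
    (F.le0 p q ↔ ((e p : Ordinal) ≤ (e q : Ordinal))) ∧
    (F.le1 p q ↔ le1 (e p : Ordinal) (e q : Ordinal)) ∧
    (F.le2 p q ↔ le2 (e p : Ordinal) (e q : Ordinal))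

/-- Pointwise comparison of two finite sets of ordinals via their increasing enumerations. -/
def pwLE (X Y : Finset Ordinal) : Prop :=
  ∃ h : X.card = Y.card, ∀ i : Fin X.card,
    ((X.orderIsoOfFin rfl i : {x // x ∈ X}) : Ordinal) ≤
      ((Y.orderIsoOfFin h.symm i : {x // x ∈ Y}) : Ordinal)

/-- `X` is the isominimal realization of the respecting forest `F` in `ℛ₂`: it is isomorphic
to `F` and pointwise minimal among all finite substructures of `ℛ₂` isomorphic to `F`. -/
def IsIsominimalRealization (le1 le2 : Ordinal → Ordinal → Prop) (F : RForest)
    (X : Finset Ordinal) : Prop :=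
  Realizes le1 le2 F X ∧ ∀ Y : Finset Ordinal, Realizes le1 le2 F Y → pwLE X Y

/-- A covering of the respecting forest `F` into `ℛ₂`. -/
def IsCovering (le1 le2 : Ordinal → Ordinal → Prop) (F : RForest)
    (c : F.P → Ordinal) : Prop :=
  (∀ p q, F.le0 p q ↔ c p ≤ c q) ∧
  (∀ p q, F.le1 p q → le1 (c p) (c q)) ∧
  (∀ p q, F.le2 p q → le2 (c p) (c q))


/-- A covering of the respecting forest `F` into the respecting forest `G`. -/
def ForestCovering (F G : RForest) (f : F.P → G.P) : Prop :=
  (∀ p q, F.le0 p q ↔ G.le0 (f p) (f q)) ∧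
  (∀ p q, F.le1 p q → G.le1 (f p) (f q)) ∧
  (∀ p q, F.le2 p q → G.le2 (f p) (f q))

section Aux
set_option linter.all false
open FirstOrder FirstOrder.Language

universe u

def RB (le1 le2 : Ordinal.{u} → Ordinal.{u} → Prop) (β : Ordinal.{u}) {k n : ℕ}
    (φ : ordLang.BoundedFormula (Fin k) n) (v : Fin k → {x : Ordinal.{u} // x < β})
    (xs : Fin n → {x : Ordinal.{u} // x < β}) : Prop :=
  letI := segStr le1 le2 β
  φ.Realize v xs

variable {le1 le2 : Ordinal.{u} → Ordinal.{u} → Prop}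

theorem RB_all {β : Ordinal.{u}} {k n : ℕ} (φ : ordLang.BoundedFormula (Fin k) (n+1))
    (v : Fin k → {x : Ordinal.{u} // x < β}) (xs) :
    RB le1 le2 β φ.all v xs ↔ ∀ z, RB le1 le2 β φ v (Fin.snoc xs z) := Iff.rfl

theorem RB_ex {β : Ordinal.{u}} {k n : ℕ} (φ : ordLang.BoundedFormula (Fin k) (n+1))
    (v : Fin k → {x : Ordinal.{u} // x < β}) (xs) :
    RB le1 le2 β φ.ex v xs ↔ ∃ z, RB le1 le2 β φ v (Fin.snoc xs z) := by
  letI := segStr le1 le2 β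
  exact BoundedFormula.realize_ex

theorem RB_formula {β : Ordinal.{u}} {k : ℕ} (φ : ordLang.Formula (Fin k))
    (v : Fin k → {x : Ordinal.{u} // x < β}) :
    RealizeIn le1 le2 β φ v ↔ RB le1 le2 β φ v default := Iff.rfl

/-- relation-preservation between two tuples -/
def SameT (le1 le2 : Ordinal.{u} → Ordinal.{u} → Prop) {ι : Type*} (f g : ι → Ordinal.{u}) : Prop :=
  ∀ r s, (f r ≤ f s ↔ g r ≤ g s) ∧ (le1 (f r) (f s) ↔ le1 (g r) (g s)) ∧
    (le2 (f r) (f s) ↔ le2 (g r) (g s))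

theorem SameT.eq_iff {ι : Type*} {f g : ι → Ordinal.{u}} (h : SameT le1 le2 f g) (r s : ι) :
    f r = f s ↔ g r = g s := by
  rw [le_antisymm_iff, le_antisymm_iff, (h r s).1, (h s r).1]

theorem SameT.lt_iff {ι : Type*} {f g : ι → Ordinal.{u}} (h : SameT le1 le2 f g) (r s : ι) :
    f r < f s ↔ g r < g s := by
  rw [← not_le, ← not_le, (h s r).1]

def joinT {β : Ordinal.{u}} {k n : ℕ} (v : Fin k → {x : Ordinal.{u} // x < β})
    (xs : Fin n → {x : Ordinal.{u} // x < β}) (i : Fin k ⊕ Fin n) : Ordinal.{u} :=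
  (Sum.elim v xs i).1

theorem realize_term {β : Ordinal.{u}} {k n : ℕ} (v : Fin k → {x : Ordinal.{u} // x < β})
    (xs : Fin n → {x : Ordinal.{u} // x < β}) (t : ordLang.Term (Fin k ⊕ Fin n)) :
    ∃ i, t = Term.var i := by
  cases t with
  | var i => exact ⟨i, rfl⟩
  | func f ts => exact (f : Empty).elim

/-- quantifier-free formulas only depend on the type -/
theorem qf_sameT {k n : ℕ} {φ : ordLang.BoundedFormula (Fin k) n} (hφ : φ.IsQF)
    {a b : Ordinal.{u}} (v : Fin k → {x : Ordinal.{u} // x < a})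
    (xs : Fin n → {x : Ordinal.{u} // x < a}) (v' : Fin k → {x : Ordinal.{u} // x < b})
    (xs' : Fin n → {x : Ordinal.{u} // x < b})
    (h : SameT le1 le2 (joinT v xs) (joinT v' xs')) :
    RB le1 le2 a φ v xs ↔ RB le1 le2 b φ v' xs' := by
  induction hφ with
  | falsum => exact Iff.rfl
  | imp h1 h2 ih1 ih2 =>
    unfold RB at *
    simp only [BoundedFormula.realize_imp]
    rw [ih1, ih2]
  | of_isAtomic hat =>
    cases hat with
    | equal t1 t2 =>
      obtain ⟨i, rfl⟩ := realize_term v xs t1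
      obtain ⟨j, rfl⟩ := realize_term v xs t2
      have := h.eq_iff i j
      unfold RB
      simp only [BoundedFormula.realize_bdEqual, Term.realize_var]
      rw [Subtype.ext_iff, Subtype.ext_iff]
      exact this
    | rel R ts =>
      have ht : ∀ l, ∃ i, ts l = Term.var i := fun l => realize_term v xs (ts l)
      choose i hi using ht
      obtain rfl : ts = fun l => Term.var (i l) := funext hi
      unfold RB
      simp only [BoundedFormula.realize_rel, Term.realize_var]
      cases R with
      | le => exact (h (i 0) (i 1)).1
      | le1 => exact (h (i 0) (i 1)).2.1
      | le2 => exact (h (i 0) (i 1)).2.2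

theorem sigma1_up {k n : ℕ} {φ : ordLang.BoundedFormula (Fin k) n} (hφ : IsSigma1 φ)
    {a b : Ordinal.{u}} (hab : a ≤ b) (v : Fin k → {x : Ordinal.{u} // x < a})
    (xs : Fin n → {x : Ordinal.{u} // x < a}) (h : RB le1 le2 a φ v xs) :
    RB le1 le2 b φ (fun j => ⟨(v j).1, lt_of_lt_of_le (v j).2 hab⟩)
      (fun j => ⟨(xs j).1, lt_of_lt_of_le (xs j).2 hab⟩) := by
  induction hφ with
  | of_isQF hq =>
    refine (qf_sameT hq _ _ _ _ ?_).1 h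
    intro r s
    rcases r with r | r <;> rcases s with s | s <;> exact ⟨Iff.rfl, Iff.rfl, Iff.rfl⟩
  | ex h1 ih =>
    rw [RB_ex] at h ⊢
    obtain ⟨z, hz⟩ := h
    refine ⟨⟨z.1, lt_of_lt_of_le z.2 hab⟩, ?_⟩
    have := ih _ hz
    convert this using 1
    funext j
    refine Fin.lastCases ?_ (fun j => ?_) j <;> simp

/-- definability -/
def Dfn (le1 le2 : Ordinal.{u} → Ordinal.{u} → Prop) {k n : ℕ}
    (C : ordLang.BoundedFormula (Fin k) n → Prop)
    (A : Ordinal.{u} → (Fin k → Ordinal.{u}) → (Fin n → Ordinal.{u}) → Prop) : Prop :=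
  ∃ φ, C φ ∧ ∀ β v xs, RB le1 le2 β φ v xs ↔ A β (fun i => (v i).1) (fun i => (xs i).1)

theorem elim_val {β : Ordinal.{u}} {k n : ℕ} (v : Fin k → {x : Ordinal.{u} // x < β})
    (xs : Fin n → {x : Ordinal.{u} // x < β}) (i : Fin k ⊕ Fin n) :
    (Sum.elim v xs i).1 = Sum.elim (fun i => (v i).1) (fun i => (xs i).1) i := by
  cases i <;> rfl

theorem dfn_le {k n : ℕ} (s t : Fin k ⊕ Fin n) :
    Dfn le1 le2 BoundedFormula.IsQF (fun _ v xs => Sum.elim v xs s ≤ Sum.elim v xs t) := by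
  refine ⟨BoundedFormula.rel (L := ordLang) (ordRel.le) ![Term.var s, Term.var t],
    .of_isAtomic (.rel _ _), fun β v xs => ?_⟩
  beta_reduce
  rw [← elim_val, ← elim_val]; exact Iff.rfl

theorem dfn_le1 {k n : ℕ} (s t : Fin k ⊕ Fin n) :
    Dfn le1 le2 BoundedFormula.IsQF (fun _ v xs => le1 (Sum.elim v xs s) (Sum.elim v xs t)) := by
  refine ⟨BoundedFormula.rel (L := ordLang) (ordRel.le1) ![Term.var s, Term.var t],
    .of_isAtomic (.rel _ _), fun β v xs => ?_⟩
  beta_reduce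
  rw [← elim_val, ← elim_val]; exact Iff.rfl

theorem dfn_le2 {k n : ℕ} (s t : Fin k ⊕ Fin n) :
    Dfn le1 le2 BoundedFormula.IsQF (fun _ v xs => le2 (Sum.elim v xs s) (Sum.elim v xs t)) := by
  refine ⟨BoundedFormula.rel (L := ordLang) (ordRel.le2) ![Term.var s, Term.var t],
    .of_isAtomic (.rel _ _), fun β v xs => ?_⟩
  beta_reduce
  rw [← elim_val, ← elim_val]; exact Iff.rfl

section closure
variable {k n : ℕ} {A B : Ordinal.{u} → (Fin k → Ordinal.{u}) → (Fin n → Ordinal.{u}) → Prop}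

theorem Dfn.imp (hA : Dfn le1 le2 BoundedFormula.IsQF A) (hB : Dfn le1 le2 BoundedFormula.IsQF B) :
    Dfn le1 le2 BoundedFormula.IsQF (fun β v xs => A β v xs → B β v xs) := by
  obtain ⟨φ, h1, h2⟩ := hA
  obtain ⟨ψ, h3, h4⟩ := hB
  refine ⟨φ.imp ψ, h1.imp h3, fun β v xs => ?_⟩
  beta_reduce
  rw [← h2, ← h4]; exact Iff.rfl

theorem dfn_false : Dfn le1 le2 BoundedFormula.IsQF (k := k) (n := n) (fun _ _ _ => False) :=
  ⟨⊥, .falsum, fun _ _ _ => Iff.rfl⟩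

theorem Dfn.congr {C} (hA : Dfn le1 le2 C A) (h : ∀ β v xs, A β v xs ↔ B β v xs) :
    Dfn le1 le2 C B := by
  obtain ⟨φ, h1, h2⟩ := hA
  exact ⟨φ, h1, fun β v xs => (h2 β v xs).trans (h _ _ _)⟩

theorem Dfn.not (hA : Dfn le1 le2 BoundedFormula.IsQF A) :
    Dfn le1 le2 BoundedFormula.IsQF (fun β v xs => ¬ A β v xs) := hA.imp dfn_false

theorem Dfn.and (hA : Dfn le1 le2 BoundedFormula.IsQF A) (hB : Dfn le1 le2 BoundedFormula.IsQF B) :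
    Dfn le1 le2 BoundedFormula.IsQF (fun β v xs => A β v xs ∧ B β v xs) :=
  (hA.imp hB.not).not.congr fun β v xs => by tauto

theorem dfn_const (p : Prop) : Dfn le1 le2 BoundedFormula.IsQF (k := k) (n := n) (fun _ _ _ => p) := by
  by_cases hp : p
  · exact (dfn_false.not).congr fun _ _ _ => by simp [hp]
  · exact dfn_false.congr fun _ _ _ => by simp [hp]

theorem Dfn.iffc (p : Prop) (hA : Dfn le1 le2 BoundedFormula.IsQF A) :
    Dfn le1 le2 BoundedFormula.IsQF (fun β v xs => p ↔ A β v xs) :=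
  (((dfn_const p).imp hA).and (hA.imp (dfn_const p))).congr fun β v xs => by tauto

theorem dfn_forall {ι : Type*} [Finite ι]
    {A : ι → Ordinal.{u} → (Fin k → Ordinal.{u}) → (Fin n → Ordinal.{u}) → Prop}
    (hA : ∀ i, Dfn le1 le2 BoundedFormula.IsQF (A i)) :
    Dfn le1 le2 BoundedFormula.IsQF (fun β v xs => ∀ i, A i β v xs) := by
  classical
  haveI := Fintype.ofFinite ι
  suffices h : ∀ S : Finset ι, Dfn le1 le2 BoundedFormula.IsQF (fun β v xs => ∀ i ∈ S, A i β v xs) from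
    (h Finset.univ).congr fun β v xs => by simp
  intro S
  induction S using Finset.induction_on with
  | empty => exact (dfn_const True).congr fun _ _ _ => by simp
  | insert i S hi ih => exact ((hA i).and ih).congr fun _ _ _ => by simp

theorem dfn_sameT {ι : Type*} [Finite ι] (f : ι → Ordinal.{u}) (σ : ι → Fin k ⊕ Fin n) :
    Dfn le1 le2 BoundedFormula.IsQF
      (fun _ v xs => SameT le1 le2 f (fun i => Sum.elim v xs (σ i))) :=
  dfn_forall fun r => dfn_forall fun s =>
    ((dfn_le _ _).iffc _).and (((dfn_le1 _ _).iffc _).and ((dfn_le2 _ _).iffc _))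

end closure

theorem snoc_val {β : Ordinal.{u}} {n : ℕ} (xs : Fin n → {x : Ordinal.{u} // x < β}) (z) :
    (fun i => ((Fin.snoc xs z : Fin (n+1) → {x : Ordinal.{u} // x < β}) i).1)
      = (Fin.snoc (fun i => (xs i).1) z.1 : Fin (n+1) → Ordinal.{u}) := by
  funext j
  refine Fin.lastCases ?_ (fun j => ?_) j <;> simp

theorem Dfn.all {k n : ℕ} {A : Ordinal.{u} → (Fin k → Ordinal.{u}) → (Fin (n+1) → Ordinal.{u}) → Prop}
    (hA : Dfn le1 le2 IsPi1 A) :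
    Dfn le1 le2 IsPi1 (fun β v xs => ∀ z < β, A β v (Fin.snoc xs z)) := by
  obtain ⟨φ, h1, h2⟩ := hA
  refine ⟨φ.all, .all h1, fun β v xs => ?_⟩
  rw [RB_all]
  simp only [h2, snoc_val, Subtype.forall]

theorem Dfn.ex1 {k n : ℕ} {A : Ordinal.{u} → (Fin k → Ordinal.{u}) → (Fin (n+1) → Ordinal.{u}) → Prop}
    (hA : Dfn le1 le2 IsSigma1 A) :
    Dfn le1 le2 IsSigma1 (fun β v xs => ∃ z < β, A β v (Fin.snoc xs z)) := by
  obtain ⟨φ, h1, h2⟩ := hA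
  refine ⟨φ.ex, .ex h1, fun β v xs => ?_⟩
  rw [RB_ex]
  simp only [h2, snoc_val, Subtype.exists, exists_prop]

theorem Dfn.ex2 {k n : ℕ} {A : Ordinal.{u} → (Fin k → Ordinal.{u}) → (Fin (n+1) → Ordinal.{u}) → Prop}
    (hA : Dfn le1 le2 IsSigma2 A) :
    Dfn le1 le2 IsSigma2 (fun β v xs => ∃ z < β, A β v (Fin.snoc xs z)) := by
  obtain ⟨φ, h1, h2⟩ := hA
  refine ⟨φ.ex, .ex h1, fun β v xs => ?_⟩
  rw [RB_ex]
  simp only [h2, snoc_val, Subtype.exists, exists_prop]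

theorem ex_blk {n m : ℕ} {β : Ordinal.{u}} {A : (Fin (n+(m+1)) → Ordinal.{u}) → Prop}
    (xs : Fin n → Ordinal.{u}) :
    (∃ ys : Fin m → Ordinal.{u}, (∀ i, ys i < β) ∧ ∃ z < β,
      A (Fin.snoc (α := fun _ => Ordinal.{u}) (Fin.append xs ys) z)) ↔
    ∃ ys : Fin (m+1) → Ordinal.{u}, (∀ i, ys i < β) ∧ A (Fin.append xs ys) := by
  constructor
  · rintro ⟨ys, h, z, hz, hA⟩
    refine ⟨Fin.snoc ys z, ?_, ?_⟩
    · intro i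
      refine Fin.lastCases ?_ (fun j => ?_) i <;> simp [hz, h]
    · rw [Fin.append_snoc]; exact hA
  · rintro ⟨ys, h, hA⟩
    refine ⟨Fin.init ys, fun i => h _, ys (Fin.last _), h _, ?_⟩
    rw [← Fin.append_snoc, Fin.snoc_init_self]; exact hA

theorem all_blk {n m : ℕ} {β : Ordinal.{u}} {A : (Fin (n+(m+1)) → Ordinal.{u}) → Prop}
    (xs : Fin n → Ordinal.{u}) :
    (∀ ys : Fin m → Ordinal.{u}, (∀ i, ys i < β) → ∀ z < β,
      A (Fin.snoc (α := fun _ => Ordinal.{u}) (Fin.append xs ys) z)) ↔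
    ∀ ys : Fin (m+1) → Ordinal.{u}, (∀ i, ys i < β) → A (Fin.append xs ys) := by
  have := ex_blk (β := β) (A := fun w => ¬ A w) xs
  rw [← not_iff_not]; push Not; exact this

theorem Dfn.alls {k n m : ℕ} {A : Ordinal.{u} → (Fin k → Ordinal.{u}) → (Fin (n+m) → Ordinal.{u}) → Prop}
    (hA : Dfn le1 le2 IsPi1 A) :
    Dfn le1 le2 IsPi1 (fun β v xs => ∀ ys : Fin m → Ordinal.{u}, (∀ i, ys i < β) →
      A β v (Fin.append xs ys)) := by
  induction m with
  | zero =>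
    refine hA.congr (fun β v xs => ?_)
    constructor
    · intro h ys _
      rw [Subsingleton.elim ys Fin.elim0]; simpa using h
    · intro h; simpa using h Fin.elim0 (fun i => i.elim0)
  | succ m ih => exact (ih (Dfn.all hA)).congr fun β v xs => all_blk xs

theorem Dfn.exs1 {k n m : ℕ} {A : Ordinal.{u} → (Fin k → Ordinal.{u}) → (Fin (n+m) → Ordinal.{u}) → Prop}
    (hA : Dfn le1 le2 IsSigma1 A) :
    Dfn le1 le2 IsSigma1 (fun β v xs => ∃ ys : Fin m → Ordinal.{u}, (∀ i, ys i < β) ∧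
      A β v (Fin.append xs ys)) := by
  induction m with
  | zero =>
    refine hA.congr (fun β v xs => ?_)
    constructor
    · intro h
      exact ⟨Fin.elim0, fun i => i.elim0, by simpa using h⟩
    · rintro ⟨ys, _, h⟩
      rw [Subsingleton.elim ys Fin.elim0] at h; simpa using h
  | succ m ih => exact (ih (Dfn.ex1 hA)).congr fun β v xs => ex_blk xs

theorem Dfn.exs2 {k n m : ℕ} {A : Ordinal.{u} → (Fin k → Ordinal.{u}) → (Fin (n+m) → Ordinal.{u}) → Prop}
    (hA : Dfn le1 le2 IsSigma2 A) :
    Dfn le1 le2 IsSigma2 (fun β v xs => ∃ ys : Fin m → Ordinal.{u}, (∀ i, ys i < β) ∧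
      A β v (Fin.append xs ys)) := by
  induction m with
  | zero =>
    refine hA.congr (fun β v xs => ?_)
    constructor
    · intro h
      exact ⟨Fin.elim0, fun i => i.elim0, by simpa using h⟩
    · rintro ⟨ys, _, h⟩
      rw [Subsingleton.elim ys Fin.elim0] at h; simpa using h
  | succ m ih => exact (ih (Dfn.ex2 hA)).congr fun β v xs => ex_blk xs


theorem Dfn.sigma1 {k n : ℕ} {A : Ordinal.{u} → (Fin k → Ordinal.{u}) → (Fin n → Ordinal.{u}) → Prop}
    (hA : Dfn le1 le2 BoundedFormula.IsQF A) : Dfn le1 le2 IsSigma1 A := by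
  obtain ⟨φ, h1, h2⟩ := hA
  exact ⟨φ, .of_isQF h1, h2⟩

theorem Dfn.pi1 {k n : ℕ} {A : Ordinal.{u} → (Fin k → Ordinal.{u}) → (Fin n → Ordinal.{u}) → Prop}
    (hA : Dfn le1 le2 BoundedFormula.IsQF A) : Dfn le1 le2 IsPi1 A := by
  obtain ⟨φ, h1, h2⟩ := hA
  exact ⟨φ, .of_isQF h1, h2⟩

theorem Dfn.sigma2 {k n : ℕ} {A : Ordinal.{u} → (Fin k → Ordinal.{u}) → (Fin n → Ordinal.{u}) → Prop}
    (hA : Dfn le1 le2 IsPi1 A) : Dfn le1 le2 IsSigma2 A := by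
  obtain ⟨φ, h1, h2⟩ := hA
  exact ⟨φ, .of_isPi1 h1, h2⟩

theorem le1_dfn (h : IsR2Pair le1 le2) {a b : Ordinal.{u}} (hab : le1 a b) {k : ℕ}
    {A : Ordinal.{u} → (Fin k → Ordinal.{u}) → (Fin 0 → Ordinal.{u}) → Prop}
    (hA : Dfn le1 le2 IsSigma1 A) (v : Fin k → Ordinal.{u}) (hv : ∀ i, v i < a) :
    A a v Fin.elim0 ↔ A b v Fin.elim0 := by
  obtain ⟨hle, H⟩ := (h.1 a b).1 hab
  obtain ⟨φ, h1, h2⟩ := hA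
  have := H k φ h1 (fun i => ⟨v i, hv i⟩)
  rw [RB_formula, RB_formula, h2, h2] at this
  convert this using 2 <;> exact Subsingleton.elim _ _

theorem le2_dfn (h : IsR2Pair le1 le2) {a b : Ordinal.{u}} (hab : le2 a b) {k : ℕ}
    {A : Ordinal.{u} → (Fin k → Ordinal.{u}) → (Fin 0 → Ordinal.{u}) → Prop}
    (hA : Dfn le1 le2 IsSigma2 A) (v : Fin k → Ordinal.{u}) (hv : ∀ i, v i < a) :
    A a v Fin.elim0 ↔ A b v Fin.elim0 := by
  obtain ⟨hle, H⟩ := (h.2 a b).1 hab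
  obtain ⟨φ, h1, h2⟩ := hA
  have := H k φ h1 (fun i => ⟨v i, hv i⟩)
  rw [RB_formula, RB_formula, h2, h2] at this
  convert this using 2 <;> exact Subsingleton.elim _ _

theorem app0 {n : ℕ} (ys : Fin n → Ordinal.{u}) :
    Fin.append Fin.elim0 ys = ys ∘ Fin.cast (Nat.zero_add n) := Fin.elim0_append ys

/-- Reflection for `≤₁`. -/
theorem refl1 (h : IsR2Pair le1 le2) {a b : Ordinal.{u}} (hab : le1 a b) {ι : Type*} [Finite ι]
    (f : ι → Ordinal.{u}) (hf : ∀ i, f i < b) :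
    ∃ g : ι → Ordinal.{u}, (∀ i, g i < a) ∧ (∀ i, f i < a → g i = f i) ∧ SameT le1 le2 f g := by
  obtain ⟨n, ⟨e⟩⟩ := Finite.exists_equiv_fin ι
  obtain ⟨k, ⟨d⟩⟩ := Finite.exists_equiv_fin {i // f i < a}
  let σ : ι ⊕ {i // f i < a} → Fin k ⊕ Fin (0 + n) :=
    Sum.elim (fun i => Sum.inr (Fin.cast (Nat.zero_add n).symm (e i))) (fun i => Sum.inl (d i))
  let f' : ι ⊕ {i // f i < a} → Ordinal.{u} := Sum.elim f (fun i => f i.1)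
  have hD := (dfn_sameT (le1 := le1) (le2 := le2) f' σ).sigma1.exs1
  have key := le1_dfn h hab hD (fun i => f (d.symm i).1) (fun i => (d.symm i).2)
  beta_reduce at key
  obtain ⟨ys, hys, hT⟩ := key.2 ⟨fun i => f (e.symm i), fun i => hf _, by
    rw [app0]
    have : (fun i => Sum.elim (fun i => f (d.symm i).1)
        ((fun i => f (e.symm i)) ∘ Fin.cast (Nat.zero_add n)) (σ i)) = f' := by
      funext i; rcases i with i | i <;> simp [σ, f']
    rw [this]
    exact fun r s => ⟨Iff.rfl, Iff.rfl, Iff.rfl⟩⟩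
  rw [app0] at hT
  refine ⟨fun i => ys (e i), fun i => hys _, fun i hi => ?_, fun r s => ?_⟩
  · have := (hT.eq_iff (Sum.inl i) (Sum.inr ⟨i, hi⟩)).1 rfl
    simpa [σ] using this
  · have := hT (Sum.inl r) (Sum.inl s)
    simpa [σ, f'] using this

theorem le1_le (h : IsR2Pair le1 le2) {a b : Ordinal.{u}} (hab : le1 a b) : a ≤ b :=
  ((h.1 a b).1 hab).1

theorem sigma1_sigma2 {k n : ℕ} {φ : ordLang.BoundedFormula (Fin k) n} (hφ : IsSigma1 φ) :
    IsSigma2 φ := by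
  induction hφ with
  | of_isQF hq => exact .of_isPi1 (.of_isQF hq)
  | ex _ ih => exact .ex ih

theorem le2_le1 (h : IsR2Pair le1 le2) {a b : Ordinal.{u}} (hab : le2 a b) : le1 a b := by
  obtain ⟨hle, H⟩ := (h.2 a b).1 hab
  exact (h.1 a b).2 ⟨hle, fun k φ hφ => H k φ (sigma1_sigma2 hφ)⟩

theorem le1_tr (h : IsR2Pair le1 le2) {a b d : Ordinal.{u}} (hab : le1 a b) (hbd : le1 b d) :
    le1 a d := by
  obtain ⟨h1, H1⟩ := (h.1 a b).1 hab
  obtain ⟨h2, H2⟩ := (h.1 b d).1 hbd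
  exact (h.1 a d).2 ⟨h1.trans h2, fun k φ hφ v => (H1 k φ hφ v).trans (H2 k φ hφ _)⟩

theorem le1_rfl (h : IsR2Pair le1 le2) (a : Ordinal.{u}) : le1 a a :=
  (h.1 a a).2 ⟨le_rfl, fun k φ hφ v => Iff.rfl⟩

theorem le1_resp (h : IsR2Pair le1 le2) {a b d : Ordinal.{u}} (hab : a ≤ b) (hbd : b ≤ d)
    (had : le1 a d) : le1 a b := by
  obtain ⟨h1, H1⟩ := (h.1 a d).1 had
  refine (h.1 a b).2 ⟨hab, fun k φ hφ v => ?_⟩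
  have e0 : ∀ (x y : Ordinal.{u}) (hxy : x ≤ y) (w : Fin k → {z // z < x}),
      RealizeIn le1 le2 x φ w →
        RealizeIn le1 le2 y φ (fun j => ⟨(w j).1, lt_of_lt_of_le (w j).2 hxy⟩) := by
    intro x y hxy w hw
    rw [RB_formula] at hw ⊢
    convert sigma1_up hφ hxy w _ hw using 1
  exact ⟨e0 a b hab v, fun hb => (H1 k φ hφ v).2 (e0 b d hbd _ hb)⟩

/-- falsity of a `Π₁`-formula is witnessed by a finite set -/
theorem pi1_wit {k n : ℕ} {φ : ordLang.BoundedFormula (Fin k) n} (hφ : IsPi1 φ)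
    {b : Ordinal.{u}} (v : Fin k → {x : Ordinal.{u} // x < b})
    (xs : Fin n → {x : Ordinal.{u} // x < b}) (hn : ¬ RB le1 le2 b φ v xs) :
    ∃ S : Finset Ordinal.{u}, (∀ x ∈ S, x < b) ∧ (∀ i, (v i).1 ∈ S) ∧ (∀ i, (xs i).1 ∈ S) ∧
      ∀ (a : Ordinal.{u}) (g : S → {x : Ordinal.{u} // x < a}),
        SameT le1 le2 (fun x : S => x.1) (fun x => (g x).1) →
        ∀ (v' : Fin k → {x : Ordinal.{u} // x < a}) (xs' : Fin n → {x : Ordinal.{u} // x < a}),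
          (∀ i (hi : (v i).1 ∈ S), v' i = g ⟨(v i).1, hi⟩) →
          (∀ i (hi : (xs i).1 ∈ S), xs' i = g ⟨(xs i).1, hi⟩) → ¬ RB le1 le2 a φ v' xs' := by
  classical
  induction hφ with
  | of_isQF hq =>
    refine ⟨Finset.univ.image (joinT v xs), ?_, ?_, ?_, ?_⟩
    · intro x hx
      obtain ⟨i, -, rfl⟩ := Finset.mem_image.1 hx
      exact (Sum.elim v xs i).2
    · exact fun i => Finset.mem_image.2 ⟨Sum.inl i, Finset.mem_univ _, rfl⟩
    · exact fun i => Finset.mem_image.2 ⟨Sum.inr i, Finset.mem_univ _, rfl⟩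
    · intro a g hg v' xs' hv hx hr
      refine hn ((qf_sameT hq _ _ _ _ ?_).2 hr)
      have hm : ∀ i, joinT v xs i ∈ Finset.univ.image (joinT v xs) :=
        fun i => Finset.mem_image.2 ⟨i, Finset.mem_univ _, rfl⟩
      have hj : ∀ i, joinT v' xs' i = (g ⟨joinT v xs i, hm i⟩).1 := by
        rintro (i | i)
        · exact congrArg Subtype.val (hv i (hm (Sum.inl i)))
        · exact congrArg Subtype.val (hx i (hm (Sum.inr i)))
      intro r s
      rw [hj, hj]
      exact hg ⟨_, hm r⟩ ⟨_, hm s⟩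
  | all h1 ih =>
    rw [RB_all] at hn
    push Not at hn
    obtain ⟨z, hz⟩ := hn
    obtain ⟨S, hS, hSv, hSx, H⟩ := ih _ hz
    refine ⟨S, hS, hSv, fun i => by simpa using hSx (Fin.castSucc i), ?_⟩
    intro a g hg v' xs' hv hx hr
    rw [RB_all] at hr
    have hzS : z.1 ∈ S := by simpa using hSx (Fin.last _)
    refine H a g hg v' (Fin.snoc xs' (g ⟨z.1, hzS⟩)) hv ?_ (hr _)
    intro i
    refine Fin.lastCases ?_ (fun j => ?_) i
    · simp
    · simpa using hx j

theorem sigma2_up (h : IsR2Pair le1 le2) {a b : Ordinal.{u}} (hab : le1 a b) (hle : a ≤ b) {k n : ℕ}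
    {φ : ordLang.BoundedFormula (Fin k) n} (hφ : IsSigma2 φ)
    (v : Fin k → {x : Ordinal.{u} // x < a})
    (xs : Fin n → {x : Ordinal.{u} // x < a}) (hr : RB le1 le2 a φ v xs) :
    RB le1 le2 b φ (fun j => ⟨(v j).1, lt_of_lt_of_le (v j).2 hle⟩)
      (fun j => ⟨(xs j).1, lt_of_lt_of_le (xs j).2 hle⟩) := by
  induction hφ with
  | of_isPi1 hp =>
    by_contra hn
    obtain ⟨S, hS, hSv, hSx, H⟩ := pi1_wit hp _ _ hn
    obtain ⟨g, hg1, hg2, hg3⟩ := refl1 h hab (fun x : S => x.1) (fun x => hS _ x.2)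
    refine H a (fun x => ⟨g x, hg1 x⟩) hg3 v xs ?_ ?_ hr
    · intro i hi; exact Subtype.ext (hg2 ⟨_, hi⟩ (v i).2).symm
    · intro i hi; exact Subtype.ext (hg2 ⟨_, hi⟩ (xs i).2).symm
  | ex h1 ih =>
    rw [RB_ex] at hr ⊢
    obtain ⟨z, hz⟩ := hr
    refine ⟨⟨z.1, lt_of_lt_of_le z.2 hle⟩, ?_⟩
    have := ih _ hz
    convert this using 1
    funext j
    refine Fin.lastCases ?_ (fun j => ?_) j <;> simp

theorem le2_resp (h : IsR2Pair le1 le2) {a b d : Ordinal.{u}} (hab : le1 a b) (hbd : le1 b d)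
    (had : le2 a d) : le2 a b := by
  obtain ⟨h1, H1⟩ := (h.2 a d).1 had
  have hle := le1_le h hab
  have hle' := le1_le h hbd
  refine (h.2 a b).2 ⟨hle, fun k φ hφ v => ?_⟩
  have e0 : ∀ (x y : Ordinal.{u}) (hxy1 : le1 x y) (hxy : x ≤ y) (w : Fin k → {z // z < x}),
      RealizeIn le1 le2 x φ w →
        RealizeIn le1 le2 y φ (fun j => ⟨(w j).1, lt_of_lt_of_le (w j).2 hxy⟩) := by
    intro x y hxy1 hxy w hw
    rw [RB_formula] at hw ⊢
    convert sigma2_up h hxy1 hxy hφ w _ hw using 1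
  exact ⟨e0 a b hab hle v, fun hb => (H1 k φ hφ v).2 (e0 b d hbd hle' _ hb)⟩

/-- a proper `≤₁`-predecessor is a limit -/
theorem le1_lim (h : IsR2Pair le1 le2) {a b : Ordinal.{u}} (hab : le1 a b) (hlt : a < b)
    {x : Ordinal.{u}} (hx : x < a) : ∃ y, x < y ∧ y < a := by
  obtain ⟨g, h1, h2, h3⟩ := refl1 h hab (ι := Bool) (fun i => if i then a else x) (by
    intro i; cases i <;> simp [hlt, hx.trans hlt])
  refine ⟨g true, ?_, h1 _⟩
  have e := h2 false (by simpa using hx)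
  have := (h3.lt_iff false true).1 (by simpa using hx)
  rw [e] at this; simpa using this

theorem le1_cont (h : IsR2Pair le1 le2) {x a : Ordinal.{u}} (hx : x < a)
    (hlim : ∀ y < a, ∃ z, y < z ∧ z < a) (H : ∀ z < a, x ≤ z → le1 x z) : le1 x a := by
  classical
  refine (h.1 x a).2 ⟨hx.le, fun k φ hφ v => ⟨fun hr => ?_, fun hr => ?_⟩⟩
  · rw [RB_formula] at hr ⊢
    convert sigma1_up hφ hx.le v _ hr using 1
  · -- push a `Σ₁` truth down to a proper initial segment
    have key : ∀ {n : ℕ} {φ : ordLang.BoundedFormula (Fin k) n} (hφ : IsSigma1 φ)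
        (w : Fin k → {z // z < a}) (xs : Fin n → {z // z < a}), RB le1 le2 a φ w xs →
        ∀ y < a, (∀ i, (w i).1 < y) → (∀ i, (xs i).1 < y) →
        ∃ z, y ≤ z ∧ z < a ∧ ∀ (hw : ∀ i, (w i).1 < z) (hxs : ∀ i, (xs i).1 < z),
          RB le1 le2 z φ (fun i => ⟨_, hw i⟩) (fun i => ⟨_, hxs i⟩) := by
      intro n φ hφ w xs hr
      induction hφ with
      | of_isQF hq =>
        intro y hy hw hxs
        refine ⟨y, le_rfl, hy, fun hw hxs => (qf_sameT hq _ _ _ _ ?_).1 hr⟩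
        intro r s
        rcases r with r | r <;> rcases s with s | s <;> exact ⟨Iff.rfl, Iff.rfl, Iff.rfl⟩
      | ex h1 ih =>
        intro y hy hw hxs
        rw [RB_ex] at hr
        obtain ⟨t, ht⟩ := hr
        obtain ⟨y', hy1, hy2⟩ := hlim (max y t.1) (max_lt hy t.2)
        obtain ⟨z, hz1, hz2, hz3⟩ := ih _ ht y' hy2
          (fun i => (hw i).trans ((le_max_left _ _).trans_lt hy1)) (by
            intro i
            refine Fin.lastCases ?_ (fun j => ?_) i
            · simpa using (le_max_right _ _).trans_lt hy1
            · simpa using (hxs j).trans ((le_max_left _ _).trans_lt hy1))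
        refine ⟨z, ((le_max_left _ _).trans hy1.le).trans hz1, hz2, fun hw' hxs' => ?_⟩
        rw [RB_ex]
        have htz : t.1 < z := ((le_max_right _ _).trans_lt hy1).trans_le hz1
        refine ⟨⟨t.1, htz⟩, ?_⟩
        have := hz3 hw' (by
            intro i
            refine Fin.lastCases ?_ (fun j => ?_) i
            · simpa using htz
            · simpa using hxs' j)
        convert this using 1
        funext j
        refine Fin.lastCases ?_ (fun j => ?_) j <;> simp
    rw [RB_formula] at hr
    obtain ⟨z, hz1, hz2, hz3⟩ := key hφ _ _ hr x hx (fun i => (v i).2) (fun i => i.elim0)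
    have := hz3 (fun i => (v i).2.trans_le hz1) (fun i => i.elim0)
    obtain ⟨hxz, HH⟩ := (h.1 x z).1 (H z hz2 hz1)
    refine (HH k φ hφ v).2 ?_
    rw [RB_formula]
    convert this using 1

/-- Reflection for `≤₂`, first form. -/
theorem refl2a (h : IsR2Pair le1 le2) {a b : Ordinal.{u}} (hab : le2 a b) (hlt : a < b)
    {ι : Type*} [Finite ι] (f : ι → Ordinal.{u}) (hf : ∀ i, f i < b) :
    ∃ g : ι → Ordinal.{u}, (∀ i, g i < a) ∧ (∀ i, f i < a → g i = f i) ∧ SameT le1 le2 f g ∧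
      ∀ i, le1 (f i) b → le1 (g i) a := by
  obtain ⟨n, ⟨e⟩⟩ := Finite.exists_equiv_fin ι
  obtain ⟨k, ⟨d⟩⟩ := Finite.exists_equiv_fin {i // f i < a}
  let τ : ι → Fin k ⊕ Fin (0 + n + 1) :=
    fun i => Sum.inr (Fin.castSucc (Fin.cast (Nat.zero_add n).symm (e i)))
  let σ : ι ⊕ {i // f i < a} → Fin k ⊕ Fin (0 + n + 1) := Sum.elim τ (fun i => Sum.inl (d i))
  let f' : ι ⊕ {i // f i < a} → Ordinal.{u} := Sum.elim f (fun i => f i.1)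
  have hD := ((dfn_sameT (le1 := le1) (le2 := le2) f' σ).and
    (dfn_forall (le1 := le1) (le2 := le2) (fun i : {i // le1 (f i) b} =>
      (dfn_le (τ i.1) (Sum.inr (Fin.last _))).imp (dfn_le1 (τ i.1) (Sum.inr (Fin.last _)))))).pi1.all.sigma2.exs2
  have key := le2_dfn h hab hD (fun i => f (d.symm i).1) (fun i => (d.symm i).2)
  beta_reduce at key
  simp only [app0] at key
  have ea : ∀ (ys : Fin n → Ordinal.{u}) (z : Ordinal.{u}) (i : ι),
      Sum.elim (fun i => f (d.symm i).1)
        (Fin.snoc (α := fun _ => Ordinal.{u}) (ys ∘ Fin.cast (Nat.zero_add n)) z) (τ i) = ys (e i) := by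
    intro ys z i; simp [τ]
  obtain ⟨ys, hys, hT⟩ := key.2 ⟨fun i => f (e.symm i), fun i => hf _, by
    intro z hz
    refine ⟨?_, ?_⟩
    · have : (fun i => Sum.elim (fun i => f (d.symm i).1)
        (Fin.snoc (α := fun _ => Ordinal.{u}) ((fun i => f (e.symm i)) ∘ Fin.cast (Nat.zero_add n)) z)
          (σ i)) = f' := by
        funext i; rcases i with i | i
        · simp only [σ, Sum.elim_inl, ea, f']; simp
        · simp [σ, f']
      rw [this]
      exact fun r s => ⟨Iff.rfl, Iff.rfl, Iff.rfl⟩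
    · intro i
      rw [ea]
      simp only [Sum.elim_inr, Fin.snoc_last, Equiv.symm_apply_apply]
      exact fun hle => le1_resp h hle hz.le i.2⟩
  have hlim : ∀ y < a, ∃ z, y < z ∧ z < a := fun y hy => le1_lim h (le2_le1 h hab) hlt hy
  have hs : ∀ z < a, SameT le1 le2 f (fun i => ys (e i)) := by
    intro z hz r s
    have := (hT z hz).1 (Sum.inl r) (Sum.inl s)
    simpa only [σ, Sum.elim_inl, ea, f'] using this
  refine ⟨fun i => ys (e i), fun i => hys _, fun i hi => ?_, fun r s => ?_, fun i hi => ?_⟩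
  · have := ((hT _ hi).1.eq_iff (Sum.inl i) (Sum.inr ⟨i, hi⟩)).1 rfl
    simp only [σ, Sum.elim_inl, ea] at this
    simpa using this
  · exact hs _ (hys (e r)) r s
  · refine le1_cont h (hys _) hlim (fun z hz => ?_)
    have := (hT z hz).2 ⟨i, hi⟩
    rw [ea] at this
    simpa only [Sum.elim_inr, Fin.snoc_last] using this

/-- Reflection for `≤₂`, second form. -/
theorem refl2b (h : IsR2Pair le1 le2) {a b c : Ordinal.{u}} (hab : le2 a b) (hac : le1 a c)
    {ι : Type*} [Finite ι] (f : ι → Ordinal.{u}) (hf : ∀ i, f i < c) {w : Ordinal.{u}} (hw : w < b) :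
    ∃ g : ι → Ordinal.{u}, (∀ i, g i < b) ∧ (∀ i, f i < a → g i = f i) ∧ SameT le1 le2 f g ∧
      ∀ i, a ≤ f i → w < g i := by
  classical
  obtain ⟨n, ⟨e⟩⟩ := Finite.exists_equiv_fin ι
  obtain ⟨k, ⟨d⟩⟩ := Finite.exists_equiv_fin {i // f i < a}
  let τ : ι → Fin k ⊕ Fin (0 + 1 + n) := fun i => Sum.inr (Fin.natAdd (0 + 1) (e i))
  let σ : ι ⊕ {i // f i < a} → Fin k ⊕ Fin (0 + 1 + n) := Sum.elim τ (fun i => Sum.inl (d i))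
  let f' : ι ⊕ {i // f i < a} → Ordinal.{u} := Sum.elim f (fun i => f i.1)
  have hD := ((dfn_sameT (le1 := le1) (le2 := le2) f' σ).and
    (dfn_forall (le1 := le1) (le2 := le2) (fun i : {i // a ≤ f i} =>
      (dfn_le (τ i.1) (Sum.inr (Fin.castAdd n (Fin.last 0)))).not))).not.pi1.alls.sigma2.ex2
  have key := le2_dfn h hab hD (fun i => f (d.symm i).1) (fun i => (d.symm i).2)
  beta_reduce at key
  have ea : ∀ (ys : Fin n → Ordinal.{u}) (z : Ordinal.{u}) (i : ι),
      Sum.elim (fun i => f (d.symm i).1)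
        (Fin.append (Fin.snoc (α := fun _ => Ordinal.{u}) Fin.elim0 z) ys) (τ i) = ys (e i) := by
    intro ys z i; simp [τ]
  have eb : ∀ (ys : Fin n → Ordinal.{u}) (z : Ordinal.{u}),
      Sum.elim (fun i => f (d.symm i).1)
        (Fin.append (Fin.snoc (α := fun _ => Ordinal.{u}) Fin.elim0 z) ys)
        (Sum.inr (Fin.castAdd n (Fin.last 0))) = z := by
    intro ys z
    simp only [Sum.elim_inr, Fin.append_left, Fin.snoc_last]
  simp only [ea, eb] at key
  have key2 := not_iff_not.2 key
  push Not at key2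
  obtain ⟨ys, hys, hT, hW⟩ := key2.1 (by
    intro z hz
    obtain ⟨g, h1, h2, h3⟩ := refl1 h hac (ι := Option ι) (fun o => o.elim z f) (by
      rintro (_ | i)
      · exact hz.trans_le (le1_le h hac)
      · exact hf i)
    refine ⟨fun i => g (some (e.symm i)), fun i => h1 _, ?_, ?_⟩
    · have : (fun i => Sum.elim (fun i => f (d.symm i).1)
        (Fin.append (Fin.snoc (α := fun _ => Ordinal.{u}) Fin.elim0 z) (fun i => g (some (e.symm i))))
          (σ i)) = fun i => g (some (Sum.elim id Subtype.val i)) := by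
        funext i; rcases i with i | i
        · simp only [σ, Sum.elim_inl, ea]; simp
        · have := h2 (some i.1) i.2
          simp only [Option.elim] at this
          simp [σ, this]
      rw [this]
      intro r s
      have := h3 (some (Sum.elim id Subtype.val r)) (some (Sum.elim id Subtype.val s))
      rcases r with r | r <;> rcases s with s | s <;> exact this
    · intro i
      have h4 := (h3.lt_iff none (some i.1)).1 (hz.trans_le i.2)
      have h5 : g none = z := h2 none hz
      rw [h5] at h4
      simpa using h4) w hw
  refine ⟨fun i => ys (e i), fun i => hys _, fun i hi => ?_, fun r s => ?_, fun i hi => ?_⟩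
  · have := (hT.eq_iff (Sum.inl i) (Sum.inr ⟨i, hi⟩)).1 rfl
    simp only [σ, Sum.elim_inl, ea] at this
    simpa using this
  · have := hT (Sum.inl r) (Sum.inl s)
    simpa only [σ, Sum.elim_inl, ea, f'] using this
  · exact hW ⟨i, hi⟩

section comb
variable {F : RForest} {c : F.P → Ordinal.{u}}

theorem cov_inj (hc : IsCovering le1 le2 F c) {p q : F.P} (h : c p = c q) : p = q :=
  F.le0_antisymm _ _ ((hc.1 _ _).2 h.le) ((hc.1 _ _).2 h.ge)

theorem le1_c (hc : IsCovering le1 le2 F c) {p q : F.P} (h : F.le1 p q) : c p ≤ c q :=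
  (hc.1 _ _).1 (F.le1_sub_le0 _ _ h)

theorem resp_c (hc : IsCovering le1 le2 F c) {p q r : F.P} (h1 : c p ≤ c q) (h2 : c q ≤ c r)
    (h : F.le1 p r) : F.le1 p q :=
  F.respects1 p q r ((hc.1 _ _).2 h1) ((hc.1 _ _).2 h2) h

open scoped Classical in
theorem lower (h : IsR2Pair le1 le2) (hc : IsCovering le1 le2 F c) {p q : F.P} (hpq : c p < c q)
    (g : F.P → Ordinal.{u}) (g1 : ∀ r, g r < c p) (g2 : ∀ r, c r < c p → g r = c r)
    (g3 : SameT le1 le2 (fun r => if c r < c q then c r else c p) g)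
    (H1 : ∀ r s, c p ≤ c r → c r < c q → c q ≤ c s → F.le1 r s → le1 (g r) (c s))
    (H2 : ∀ r s, c p ≤ c r → c r < c q → c q ≤ c s → F.le2 r s → le2 (g r) (c s)) :
    ∃ c' : F.P → Ordinal.{u}, IsCovering le1 le2 F c' ∧ c' < c := by
  refine ⟨fun r => if c r < c q then g r else c r, ⟨fun r s => ?_, fun r s hrs => ?_, fun r s hrs => ?_⟩, ?_⟩
  · rw [hc.1]
    by_cases hr : c r < c q <;> by_cases hs : c s < c q
    · have := (g3 r s).1
      simpa only [hr, hs, if_true] using this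
    · simp only [hr, hs, if_true, if_false]
      exact ⟨fun _ => ((g1 r).trans hpq).le.trans (not_lt.1 hs), fun _ => hr.le.trans (not_lt.1 hs)⟩
    · simp only [hr, hs, if_true, if_false]
      exact ⟨fun hh => absurd (hh.trans_lt hs) hr, fun hh => absurd (hh.trans_lt ((g1 s).trans hpq)) hr⟩
    · simp only [hr, hs, if_false]
  · have hle := le1_c hc hrs
    by_cases hr : c r < c q <;> by_cases hs : c s < c q
    · have := (g3 r s).2.1
      simp only [hr, hs, if_true] at this ⊢
      exact this.1 (hc.2.1 _ _ hrs)
    · simp only [hr, hs, if_true, if_false]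
      rcases lt_or_ge (c r) (c p) with hp | hp
      · rw [g2 r hp]; exact hc.2.1 _ _ hrs
      · exact H1 r s hp hr (not_lt.1 hs) hrs
    · exact absurd (hle.trans_lt hs) hr
    · simp only [hr, hs, if_false]
      exact hc.2.1 _ _ hrs
  · have hle := le1_c hc (F.le2_sub_le1 _ _ hrs)
    by_cases hr : c r < c q <;> by_cases hs : c s < c q
    · have := (g3 r s).2.2
      simp only [hr, hs, if_true] at this ⊢
      exact this.1 (hc.2.2 _ _ hrs)
    · simp only [hr, hs, if_true, if_false]
      rcases lt_or_ge (c r) (c p) with hp | hp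
      · rw [g2 r hp]; exact hc.2.2 _ _ hrs
      · exact H2 r s hp hr (not_lt.1 hs) hrs
    · exact absurd (hle.trans_lt hs) hr
    · simp only [hr, hs, if_false]
      exact hc.2.2 _ _ hrs
  · refine Pi.lt_def.2 ⟨fun r => ?_, p, ?_⟩
    · by_cases hr : c r < c q
      · simp only [hr, if_true]
        rcases lt_or_ge (c r) (c p) with hp | hp
        · exact (g2 r hp).le
        · exact (g1 r).le.trans hp
      · simp only [hr, if_false]; exact le_rfl
    · simp only [hpq, if_true]; exact g1 p

theorem caseA (h : IsR2Pair le1 le2) (hc : IsCovering le1 le2 F c) {p q : F.P}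
    (h1 : le1 (c p) (c q)) (h2 : ¬ F.le1 p q) :
    ∃ c' : F.P → Ordinal.{u}, IsCovering le1 le2 F c' ∧ c' < c := by
  classical
  obtain ⟨q, ⟨h1, h2⟩, hmin⟩ := (InvImage.wf c wellFounded_lt).has_min
    {q | le1 (c p) (c q) ∧ ¬ F.le1 p q} ⟨q, h1, h2⟩
  have hmin' : ∀ r, c r < c q → le1 (c p) (c r) → F.le1 p r := by
    intro r hr hpr
    by_contra hn
    exact hmin r ⟨hpr, hn⟩ hr
  have hpq : c p < c q := lt_of_le_of_ne (le1_le h h1) (fun e => h2 (cov_inj hc e ▸ F.le1_refl p))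
  obtain ⟨g, g1, g2, g3⟩ := refl1 h h1 (fun r => if c r < c q then c r else c p) (by
    intro r; split_ifs with hr
    exacts [hr, hpq])
  have no : ∀ r s, c p ≤ c r → c r < c q → c q ≤ c s → ¬ F.le1 r s := by
    intro r s hp hr hs hrs
    exact h2 (F.le1_trans _ _ _ (hmin' r hr (le1_resp h hp hr.le h1)) (resp_c hc hr.le hs hrs))
  refine lower h hc hpq g g1 ?_ g3 (fun r s a b d e => absurd e (no r s a b d))
    (fun r s a b d e => absurd (F.le2_sub_le1 _ _ e) (no r s a b d))
  intro r hr
  have := g2 r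
  simp only [hr.trans hpq, if_true] at this
  exact this hr

theorem caseB (h : IsR2Pair le1 le2) (hc : IsCovering le1 le2 F c) {p q : F.P}
    (hfull : ∀ r s, le1 (c r) (c s) → F.le1 r s)
    (h1 : le2 (c p) (c q)) (h2 : ¬ F.le2 p q) :
    ∃ c' : F.P → Ordinal.{u}, IsCovering le1 le2 F c' ∧ c' < c := by
  classical
  obtain ⟨q, ⟨h1, h2⟩, hmin⟩ := (InvImage.wf c wellFounded_lt).has_min
    {q | le2 (c p) (c q) ∧ ¬ F.le2 p q} ⟨q, h1, h2⟩
  have hmin' : ∀ r, c r < c q → le2 (c p) (c r) → F.le2 p r := by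
    intro r hr hpr
    by_contra hn
    exact hmin r ⟨hpr, hn⟩ hr
  have h11 := le2_le1 h h1
  have hpq1 := hfull _ _ h11
  have hpq : c p < c q := lt_of_le_of_ne (le1_le h h11) (fun e => h2 (cov_inj hc e ▸ F.le2_refl p))
  -- no `≤₂` from `[p,q)` to the cone of `q`
  have no : ∀ r s, c p ≤ c r → c r < c q → F.le1 q s → ¬ F.le2 r s := by
    intro r s hp hr hqs hrs
    have hrq : F.le1 r q := resp_c hc hr.le (le1_c hc hqs) (F.le2_sub_le1 _ _ hrs)
    have hrq2 : F.le2 r q := F.respects2 _ _ _ hrq hqs hrs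
    have hpr : le1 (c p) (c r) := le1_resp h hp hr.le h11
    have hpr2 : le2 (c p) (c r) := le2_resp h hpr (hc.2.1 _ _ hrq) h1
    exact h2 (F.le2_trans _ _ _ (hmin' r hr hpr2) hrq2)
  by_cases hs : ∃ s, c q < c s ∧ F.le1 p s ∧ ¬ F.le1 q s
  · obtain ⟨s, hqs, hps, hnqs⟩ := hs
    -- the cone of `q` lies below `s`
    have hD : ∀ d, F.le1 q d → c d < c s := by
      intro d hd
      by_contra hn
      exact hnqs (resp_c hc hqs.le (not_lt.1 hn) hd)
    have hD' : ∀ d, F.le1 q d → c q ≤ c d := fun d hd => le1_c hc hd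
    obtain ⟨m, hm1, hm2⟩ := Finset.exists_max_image (Finset.univ.filter (fun r => c r < c q)) c
      ⟨p, by simpa using hpq⟩
    simp only [Finset.mem_filter, Finset.mem_univ, true_and] at hm1 hm2
    obtain ⟨g, g1, g2, g3, g4⟩ := refl2b h h1 (hc.2.1 _ _ hps)
      (fun r => if c r < c p ∨ F.le1 q r then c r else c p) (by
        intro r; split_ifs with hr
        · rcases hr with hr | hr
          · exact hr.trans (hpq.trans hqs)
          · exact hD r hr
        · exact hpq.trans hqs) hm1
    have g4' : ∀ d, F.le1 q d → c m < g d := by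
      intro d hd
      refine g4 d ?_
      simp only [hd, or_true, if_true]
      exact hpq.le.trans (hD' d hd)
    have g2' : ∀ r, c r < c p → g r = c r := by
      intro r hr
      have := g2 r
      simp only [hr, true_or, if_true] at this
      exact this trivial
    have hout : ∀ r d, ¬ F.le1 q r → F.le1 q d → c q ≤ c r → c d < c r := by
      intro r d hr hd hqr
      by_contra hn
      exact hr (resp_c hc hqr (not_lt.1 hn) hd)
    refine ⟨fun r => if F.le1 q r then g r else c r, ⟨fun r s => ?_, fun r s hrs => ?_, fun r s hrs => ?_⟩, ?_⟩
    · rw [hc.1]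
      by_cases hr : F.le1 q r <;> by_cases hs : F.le1 q s
      · have := (g3 r s).1
        simpa only [hr, hs, or_true, if_true] using this
      · simp only [hr, hs, if_true, if_false]
        rcases lt_or_ge (c s) (c q) with hsq | hsq
        · exact ⟨fun hh => absurd (hh.trans_lt hsq) (not_lt.2 (hD' r hr)),
            fun hh => absurd (hh.trans (hm2 s hsq)) (not_le.2 (g4' r hr))⟩
        · exact ⟨fun hh => (g1 r).le.trans hsq, fun hh => (hout s r hs hr hsq).le⟩
      · simp only [hr, hs, if_true, if_false]
        rcases lt_or_ge (c r) (c q) with hrq | hrq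
        · exact ⟨fun hh => (hm2 r hrq).trans (g4' s hs).le, fun hh => hrq.le.trans (hD' s hs)⟩
        · exact ⟨fun hh => absurd hh (not_le.2 (hout r s hr hs hrq)),
            fun hh => absurd (hrq.trans hh) (not_le.2 (g1 s))⟩
      · simp only [hr, hs, if_false]
    · by_cases hr : F.le1 q r <;> by_cases hs : F.le1 q s
      · have := (g3 r s).2.1
        simp only [hr, hs, or_true, if_true] at this ⊢
        exact this.1 (hc.2.1 _ _ hrs)
      · exact absurd (F.le1_trans _ _ _ hr hrs) hs
      · simp only [hr, hs, if_true, if_false]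
        rcases lt_or_ge (c r) (c q) with hrq | hrq
        · have hrq1 : F.le1 r q := resp_c hc hrq.le (hD' s hs) hrs
          exact le1_resp h ((hm2 r hrq).trans (g4' s hs).le) (g1 s).le (hc.2.1 _ _ hrq1)
        · exact absurd (le1_c hc hrs) (not_le.2 (hout r s hr hs hrq))
      · simp only [hr, hs, if_false]
        exact hc.2.1 _ _ hrs
    · by_cases hr : F.le1 q r <;> by_cases hs : F.le1 q s
      · have := (g3 r s).2.2
        simp only [hr, hs, or_true, if_true] at this ⊢
        exact this.1 (hc.2.2 _ _ hrs)
      · exact absurd (F.le1_trans _ _ _ hr (F.le2_sub_le1 _ _ hrs)) hs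
      · simp only [hr, hs, if_true, if_false]
        rcases lt_or_ge (c r) (c q) with hrq | hrq
        · rcases lt_or_ge (c r) (c p) with hrp | hrp
          · have := (g3 r s).2.2
            simp only [hrp, hs, true_or, or_true, if_true] at this
            rw [g2' r hrp] at this
            exact this.1 (hc.2.2 _ _ hrs)
          · exact absurd hrs (no r s hrp hrq hs)
        · exact absurd (le1_c hc (F.le2_sub_le1 _ _ hrs)) (not_le.2 (hout r s hr hs hrq))
      · simp only [hr, hs, if_false]
        exact hc.2.2 _ _ hrs
    · refine Pi.lt_def.2 ⟨fun r => ?_, q, ?_⟩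
      · by_cases hr : F.le1 q r
        · simp only [hr, if_true]
          exact (g1 r).le.trans (hD' r hr)
        · simp only [hr, if_false]; exact le_rfl
      · simp only [F.le1_refl q, if_true]; exact g1 q
  · push Not at hs
    obtain ⟨g, g1, g2, g3, g4⟩ := refl2a h h1 hpq (fun r => if c r < c q then c r else c p) (by
      intro r; split_ifs with hr
      exacts [hr, hpq])
    have key : ∀ r s, c p ≤ c r → c r < c q → c q ≤ c s → F.le1 r s → F.le1 r q ∧ F.le1 p s := by
      intro r s hp hr hs' hrs
      have hpr : F.le1 p r := resp_c hc hp hr.le hpq1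
      exact ⟨resp_c hc hr.le hs' hrs, F.le1_trans _ _ _ hpr hrs⟩
    refine lower h hc hpq g g1 ?_ g3 ?_ ?_
    · intro r hr
      have := g2 r
      simp only [hr.trans hpq, if_true] at this
      exact this hr
    · intro r s hp hr hs' hrs
      obtain ⟨hrq, hps⟩ := key r s hp hr hs' hrs
      have := g4 r
      simp only [hr, if_true] at this
      exact le1_tr h (this (hc.2.1 _ _ hrq)) (hc.2.1 _ _ hps)
    · intro r s hp hr hs' hrs
      obtain ⟨hrq, hps⟩ := key r s hp hr hs' (F.le2_sub_le1 _ _ hrs)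
      refine absurd hrs (no r s hp hr ?_)
      rcases hs'.lt_or_eq with hlt | heq
      · exact hs s hlt hps
      · rw [← cov_inj hc heq]; exact F.le1_refl q

theorem exists_min (h : IsR2Pair le1 le2) (hc : IsCovering le1 le2 F c) :
    ∃ c' : F.P → Ordinal.{u}, IsCovering le1 le2 F c' ∧ c' ≤ c ∧
      (∀ r s, le1 (c' r) (c' s) → F.le1 r s) ∧ (∀ r s, le2 (c' r) (c' s) → F.le2 r s) := by
  obtain ⟨c', ⟨hc', hle⟩, hmin⟩ := (wellFounded_lt (α := F.P → Ordinal.{u})).has_min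
    {c' | IsCovering le1 le2 F c' ∧ c' ≤ c} ⟨c, hc, le_rfl⟩
  have hno : ¬ ∃ d : F.P → Ordinal.{u}, IsCovering le1 le2 F d ∧ d < c' := by
    rintro ⟨d, hd, hlt⟩
    exact hmin d ⟨hd, hlt.le.trans hle⟩ hlt
  have hf : ∀ r s, le1 (c' r) (c' s) → F.le1 r s := by
    intro r s hrs
    by_contra hn
    exact hno (caseA h hc' hrs hn)
  refine ⟨c', hc', hle, hf, fun r s hrs => ?_⟩
  by_contra hn
  exact hno (caseB h hc' hf hrs hn)

end comb
end Aux

open scoped Classical in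
theorem stmt1 (le1 le2 : Ordinal → Ordinal → Prop) (h : IsR2Pair le1 le2) (F : RForest)
    (X : Finset Ordinal) (hX : IsIsominimalRealization le1 le2 F X)
    (c : F.P → Ordinal) (hc : IsCovering le1 le2 F c) :
    pwLE X (Finset.univ.image c) := by
  obtain ⟨d, hd, hle, hd1, hd2⟩ := exists_min h hc
  have inj : ∀ {c : F.P → Ordinal}, IsCovering le1 le2 F c → Function.Injective c :=
    fun hc _ _ e => cov_inj hc e
  have hR : Realizes le1 le2 F (Finset.univ.image d) := by
    refine ⟨Equiv.ofBijective
      (fun p => ⟨d p, Finset.mem_image.2 ⟨p, Finset.mem_univ _, rfl⟩⟩) ⟨?_, ?_⟩, ?_⟩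
    · intro p q e
      exact inj hd (congrArg Subtype.val e)
    · rintro ⟨x, hx⟩
      obtain ⟨p, -, rfl⟩ := Finset.mem_image.1 hx
      exact ⟨p, rfl⟩
    · intro p q
      exact ⟨hd.1 p q, ⟨hd.2.1 p q, hd1 p q⟩, ⟨hd.2.2 p q, hd2 p q⟩⟩
  obtain ⟨hcard, hpw⟩ := hX.2 _ hR
  have hcd : (Finset.univ.image d).card = (Finset.univ.image c).card := by
    rw [Finset.card_image_of_injective _ (inj hd), Finset.card_image_of_injective _ (inj hc)]
  refine ⟨hcard.trans hcd, fun i => (hpw i).trans ?_⟩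
  have hpi : ∀ i : Fin X.card, ∃ p, d p = (Finset.univ.image d).orderEmbOfFin hcard.symm i := by
    intro i
    obtain ⟨p, -, hp⟩ := Finset.mem_image.1
      ((Finset.univ.image d).orderEmbOfFin_mem hcard.symm i)
    exact ⟨p, hp⟩
  choose π hπ using hpi
  have hu := Finset.orderEmbOfFin_unique (s := Finset.univ.image c) (hcard.trans hcd).symm
    (f := fun i => c (π i)) (fun i => Finset.mem_image.2 ⟨_, Finset.mem_univ _, rfl⟩) (by
      intro i j hij
      have h1 : d (π i) < d (π j) := by
        rw [hπ, hπ]; exact (OrderEmbedding.lt_iff_lt _).2 hij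
      rw [← not_le, ← hc.1, hd.1, not_le]
      exact h1)
  have e1 := congrFun hu i
  have e2 := hπ i
  rw [Finset.coe_orderIsoOfFin_apply, Finset.coe_orderIsoOfFin_apply, ← e2, ← e1]
  exact hle _
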